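/- Let μ be a probability measure on ℝⁿ with a regular, log-concave density ρ = e^{−ψ}, let λ > 0, and let f be a μ-tempered function with ∫ f dμ = 0, ∫ f² dμ = 1 and L_μ f = −λ f, where L_μ u = Δu − ⟨∇ψ, ∇u⟩. Then |∫ ∇f dμ|² = λ² |∫ f(x) x dμ(x)|² ≤ λ² ‖Cov(μ)‖_op, where Cov(μ) is the covariance matrix of μ and ‖·‖_op the operator norm. -/

import Mathlib

open MeasureTheory Real
open scoped ENNReal RealInnerProductSpace

noncomputable section

abbrev Euc (n : ℕ) := EuclideanSpace ℝ (Fin n)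

/-- A nonnegative function `g` is log-concave: `g(ax+by) ≥ g(x)^a g(y)^b`. -/
def IsLogConcaveFun {n : ℕ} (g : Euc n → ℝ) : Prop :=
  (∀ x, 0 ≤ g x) ∧
  ∀ x y : Euc n, ∀ a b : ℝ, 0 ≤ a → 0 ≤ b → a + b = 1 →
    g x ^ a * g y ^ b ≤ g (a • x + b • y)

def IsLogConcaveMeasure {n : ℕ} (μ : Measure (Euc n)) : Prop :=
  ∃ ρ : Euc n → ℝ, Measurable ρ ∧ IsLogConcaveFun ρ ∧
    μ = volume.withDensity (fun x => ENNReal.ofReal (ρ x))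

def poincareSet {n : ℕ} (μ : Measure (Euc n)) : Set ℝ :=
  {C : ℝ | 0 ≤ C ∧ ∀ f : Euc n → ℝ, LocallyLipschitz f →
    Integrable (fun x => ‖gradient f x‖ ^ 2) μ →
    ∫ x, f x ^ 2 ∂μ - (∫ x, f x ∂μ) ^ 2 ≤ C * ∫ x, ‖gradient f x‖ ^ 2 ∂μ}

def poincareConst {n : ℕ} (μ : Measure (Euc n)) : ℝ := sInf (poincareSet μ)

def covMatrix {n : ℕ} (μ : Measure (Euc n)) : Matrix (Fin n) (Fin n) ℝ :=
  Matrix.of fun i j => ∫ x, x i * x j ∂μ - (∫ x, x i ∂μ) * (∫ x, x j ∂μ)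

def opNorm {n : ℕ} (M : Matrix (Fin n) (Fin n) ℝ) : ℝ :=
  ‖Matrix.toEuclideanCLM (𝕜 := ℝ) M‖

def IsIsotropic {n : ℕ} (μ : Measure (Euc n)) : Prop :=
  (∫ x, x ∂μ) = 0 ∧ ∀ i j, ∫ x, x i * x j ∂μ = if i = j then 1 else 0

def UniformlyLogConcave {n : ℕ} (t : ℝ) (μ : Measure (Euc n)) : Prop :=
  ∃ g : Euc n → ℝ, Measurable g ∧ IsLogConcaveFun g ∧
    μ = volume.withDensity (fun x => ENNReal.ofReal (Real.exp (-t * ‖x‖ ^ 2 / 2) * g x))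

def IsRegularPotential {n : ℕ} (ψ : Euc n → ℝ) : Prop :=
  ContDiff ℝ (⊤ : ℕ∞) ψ ∧
  (∃ ε : ℝ, 0 < ε ∧ ∀ x v : Euc n,
    ε * ‖v‖ ^ 2 ≤ iteratedFDeriv ℝ 2 ψ x ![v, v] ∧
    iteratedFDeriv ℝ 2 ψ x ![v, v] ≤ ε⁻¹ * ‖v‖ ^ 2) ∧
  (∀ m : ℕ, ∃ C : ℝ, ∃ k : ℕ, ∀ x, ‖iteratedFDeriv ℝ m ψ x‖ ≤ C * (1 + ‖x‖) ^ k)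

def IsRegularMeasure {n : ℕ} (μ : Measure (Euc n)) (ψ : Euc n → ℝ) : Prop :=
  IsRegularPotential ψ ∧ μ = volume.withDensity (fun x => ENNReal.ofReal (Real.exp (-ψ x)))

def IsTempered {n : ℕ} (ρ : Euc n → ℝ) (f : Euc n → ℝ) : Prop :=
  ContDiff ℝ (⊤ : ℕ∞) f ∧ ∀ m : ℕ, ∃ C : ℝ, 0 < C ∧ ∃ a : ℝ, 0 < a ∧ ∀ x,
    ‖iteratedFDeriv ℝ m f x‖ ≤ C / Real.sqrt (ρ x) * Real.exp (-a * ‖x‖)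

def lap {n : ℕ} (f : Euc n → ℝ) (x : Euc n) : ℝ :=
  ∑ i, iteratedFDeriv ℝ 2 f x ![EuclideanSpace.single i (1:ℝ), EuclideanSpace.single i (1:ℝ)]

def Lop {n : ℕ} (ψ u : Euc n → ℝ) (x : Euc n) : ℝ :=
  lap u x - ⟪gradient ψ x, gradient u x⟫

def gaussDensity (n : ℕ) (s : ℝ) (x : Euc n) : ℝ :=
  (2 * π * s) ^ (-(n : ℝ) / 2) * Real.exp (-‖x‖ ^ 2 / (2 * s))

def gaussMeasure (n : ℕ) (s : ℝ) : Measure (Euc n) :=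
  volume.withDensity fun x => ENNReal.ofReal (gaussDensity n s x)

def tiltZ {n : ℕ} (ρ : Euc n → ℝ) (t : ℝ) (θ : Euc n) : ℝ :=
  ∫ x, Real.exp (⟪θ, x⟫ - t * ‖x‖ ^ 2 / 2) * ρ x

def tiltDensity {n : ℕ} (ρ : Euc n → ℝ) (t : ℝ) (θ : Euc n) (x : Euc n) : ℝ :=
  Real.exp (⟪θ, x⟫ - t * ‖x‖ ^ 2 / 2) * ρ x / tiltZ ρ t θ

def tiltMeasure {n : ℕ} (ρ : Euc n → ℝ) (t : ℝ) (θ : Euc n) : Measure (Euc n) :=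
  volume.withDensity fun x => ENNReal.ofReal (tiltDensity ρ t θ x)

def varD {n : ℕ} (p : Euc n → ℝ) (f : Euc n → ℝ) : ℝ :=
  (∫ x, f x ^ 2 * p x) - (∫ x, f x * p x) ^ 2

end

/-!
Pairing the eigenvalue equation with a linear function `w = ⟪v, ·⟫` and integrating by parts,
`∫ ⟪∇w, ∇f⟫ dμ = -∫ w (L f) dμ`, gives `⟪v, ∫ ∇f dμ⟫ = λ ⟪v, ∫ f x dμ⟫` for every `v`, whence
`∫ ∇f dμ = λ ∫ f x dμ`. Every integrand is the product of a function of temperate growth and a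
tempered one. Such products are again tempered, and tempered functions lie in `L²(μ)`. So do the
coordinate functions, because strong convexity of `ψ` makes the constant `1` tempered.

Since `f` has mean `0` and variance `1`, `⟪v, ∫ f x dμ⟫` is the covariance of `f` and `⟪v, ·⟫`, so
Cauchy–Schwarz bounds its square by the variance `⟪v, Cov(μ) v⟫`; now take `v = ∫ f x dμ`.
-/

open Function ProbabilityTheory

section SubexpDecay

lemma exists_one_add_pow_le_mul_exp (k : ℕ) {b : ℝ} (hb : 0 < b) :
    ∃ M : ℝ, 0 < M ∧ ∀ t : ℝ, 0 ≤ t → (1 + t) ^ k ≤ M * exp (b * t) := by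
  refine ⟨k.factorial / b ^ k * exp b, by positivity, fun t ht => ?_⟩
  have hexp : (b * (1 + t)) ^ k / k.factorial ≤ exp (b * (1 + t)) :=
    pow_div_factorial_le_exp _ (by positivity) k
  calc (1 + t) ^ k = k.factorial / b ^ k * ((b * (1 + t)) ^ k / k.factorial) := by
        rw [mul_pow]; field_simp
    _ ≤ k.factorial / b ^ k * exp (b * (1 + t)) := by gcongr
    _ = k.factorial / b ^ k * exp b * exp (b * t) := by rw [mul_one_add, exp_add]; ring

lemma integrable_exp_neg_mul_norm {E : Type*} [NormedAddCommGroup E] [MeasurableSpace E]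
    [OpensMeasurableSpace E] {μ : Measure E} [μ.HasTemperateGrowth] {a : ℝ} (ha : 0 < a) :
    Integrable (fun x => exp (-a * ‖x‖)) μ := by
  obtain ⟨M, -, hM⟩ := exists_one_add_pow_le_mul_exp μ.integrablePower ha
  refine (μ.integrable_pow_neg_integrablePower.const_mul M).mono'
    (by fun_prop) (.of_forall fun x => ?_)
  rw [norm_of_nonneg (exp_pos _).le, rpow_neg (by positivity), rpow_natCast, neg_mul, exp_neg,
    ← div_eq_mul_inv, le_div_iff₀ (by positivity), inv_mul_le_iff₀ (exp_pos _), mul_comm (exp _)]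
  exact hM _ (norm_nonneg x)

variable {E F G : Type*} [NormedAddCommGroup E] [NormedAddCommGroup F] [NormedAddCommGroup G]
  {ρ : E → ℝ}

/-- Subexponential decay of `g` relative to `ρ`, with the bound in the form used by `IsTempered`:
a function is tempered iff it is smooth and all its iterated derivatives satisfy `SubexpDecay`. -/
def SubexpDecay (ρ : E → ℝ) (g : E → F) : Prop :=
  ∃ C : ℝ, 0 < C ∧ ∃ a : ℝ, 0 < a ∧ ∀ x, ‖g x‖ ≤ C / √(ρ x) * exp (-a * ‖x‖)

namespace SubexpDecay

lemma zero : SubexpDecay ρ (0 : E → F) :=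
  ⟨1, one_pos, 1, one_pos, fun x => by simpa using by positivity⟩

lemma add {g h : E → F} (hg : SubexpDecay ρ g) (hh : SubexpDecay ρ h) :
    SubexpDecay ρ (g + h) := by
  obtain ⟨C, hC, a, ha, hg⟩ := hg
  obtain ⟨D, hD, b, hb, hh⟩ := hh
  refine ⟨C + D, by positivity, min a b, lt_min ha hb, fun x => ?_⟩
  calc ‖g x + h x‖ ≤ C / √(ρ x) * exp (-a * ‖x‖) + D / √(ρ x) * exp (-b * ‖x‖) :=
        norm_add_le_of_le (hg x) (hh x)
    _ ≤ C / √(ρ x) * exp (-min a b * ‖x‖) + D / √(ρ x) * exp (-min a b * ‖x‖) := by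
        gcongr
        exacts [min_le_left a b, min_le_right a b]
    _ = (C + D) / √(ρ x) * exp (-min a b * ‖x‖) := by ring

lemma mono {g : E → F} {h : E → G} (hg : SubexpDecay ρ g) (hle : ∀ x, ‖h x‖ ≤ ‖g x‖) :
    SubexpDecay ρ h := by
  obtain ⟨C, hC, a, ha, hg⟩ := hg
  exact ⟨C, hC, a, ha, fun x => (hle x).trans (hg x)⟩

-- Half of the exponential rate absorbs the polynomial factor.
lemma of_norm_le_mul_pow {g : E → F} {h : E → G} (hg : SubexpDecay ρ g) (K : ℝ) (k : ℕ)
    (hle : ∀ x, ‖h x‖ ≤ K * (1 + ‖x‖) ^ k * ‖g x‖) : SubexpDecay ρ h := by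
  obtain ⟨C, hC, a, ha, hg⟩ := hg
  obtain ⟨M, hM, hpow⟩ := exists_one_add_pow_le_mul_exp k (half_pos ha)
  refine ⟨(|K| + 1) * M * C, by positivity, a / 2, half_pos ha, fun x => ?_⟩
  calc ‖h x‖ ≤ K * (1 + ‖x‖) ^ k * ‖g x‖ := hle x
    _ ≤ (|K| + 1) * (M * exp (a / 2 * ‖x‖)) * (C / √(ρ x) * exp (-a * ‖x‖)) := by
        gcongr
        · linarith [le_abs_self K]
        · exact hpow _ (norm_nonneg x)
        · exact hg x
    _ = (|K| + 1) * M * C / √(ρ x) * (exp (a / 2 * ‖x‖) * exp (-a * ‖x‖)) := by ring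
    _ = (|K| + 1) * M * C / √(ρ x) * exp (-(a / 2) * ‖x‖) := by
        rw [← exp_add]; congr 2; ring

end SubexpDecay

end SubexpDecay

section TemperateGrowth

variable {E F : Type*} [NormedAddCommGroup E] [NormedSpace ℝ E] [NormedAddCommGroup F]
  [NormedSpace ℝ F]

lemma norm_iteratedFDeriv_fderiv_apply_le {f : E → F} {m : ℕ} (hf : ContDiff ℝ (m + 1) f)
    (v x : E) :
    ‖iteratedFDeriv ℝ m (fun y => fderiv ℝ f y v) x‖ ≤ ‖v‖ * ‖iteratedFDeriv ℝ (m + 1) f x‖ := by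
  rw [← norm_iteratedFDeriv_fderiv]
  exact norm_iteratedFDeriv_clm_apply_const (hf.fderiv_right le_rfl).contDiffAt le_rfl

lemma hasTemperateGrowth_fderiv_apply {f : E → F} (hf : HasTemperateGrowth f) (v : E) :
    HasTemperateGrowth fun x => fderiv ℝ f x v := by
  refine ⟨(contDiff_infty_iff_fderiv.1 hf.1).2.clm_apply contDiff_const, fun m => ?_⟩
  obtain ⟨k, C, hC⟩ := hf.2 (m + 1)
  refine ⟨k, ‖v‖ * C, fun x => ?_⟩
  calc ‖iteratedFDeriv ℝ m (fun y => fderiv ℝ f y v) x‖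
      ≤ ‖v‖ * ‖iteratedFDeriv ℝ (m + 1) f x‖ :=
        norm_iteratedFDeriv_fderiv_apply_le (contDiff_infty.1 hf.1 (m + 1)) v x
    _ ≤ ‖v‖ * (C * (1 + ‖x‖) ^ k) := by
        gcongr
        exact hC x
    _ = ‖v‖ * C * (1 + ‖x‖) ^ k := (mul_assoc _ _ _).symm

end TemperateGrowth

namespace IsTempered

variable {n : ℕ} {ρ : Euc n → ℝ} {f g : Euc n → ℝ}

lemma subexpDecay (hf : IsTempered ρ f) (m : ℕ) : SubexpDecay ρ (iteratedFDeriv ℝ m f) := hf.2 m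

lemma zero : IsTempered ρ 0 :=
  ⟨contDiff_const, fun m => SubexpDecay.zero.mono (g := (0 : Euc n → ℝ)) fun x => by
    simp [Pi.zero_def, iteratedFDeriv_fun_zero]⟩

lemma add (hf : IsTempered ρ f) (hg : IsTempered ρ g) : IsTempered ρ (f + g) := by
  refine ⟨hf.1.add hg.1, fun m => ((hf.subexpDecay m).add (hg.subexpDecay m)).mono fun x => ?_⟩
  rw [iteratedFDeriv_add_apply (hf.1.contDiffAt.of_le (mod_cast le_top))
    (hg.1.contDiffAt.of_le (mod_cast le_top)), Pi.add_apply]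

lemma sum {ι : Type*} {s : Finset ι} {u : ι → Euc n → ℝ} (hu : ∀ i ∈ s, IsTempered ρ (u i)) :
    IsTempered ρ (∑ i ∈ s, u i) :=
  Finset.sum_induction u (IsTempered ρ) (fun _ _ => add) zero hu

lemma fderiv_apply (hf : IsTempered ρ f) (v : Euc n) :
    IsTempered ρ fun x => fderiv ℝ f x v := by
  refine ⟨(contDiff_infty_iff_fderiv.1 hf.1).2.clm_apply contDiff_const, fun m => ?_⟩
  refine (hf.subexpDecay (m + 1)).of_norm_le_mul_pow ‖v‖ 0 fun x => ?_
  simpa using norm_iteratedFDeriv_fderiv_apply_le (contDiff_infty.1 hf.1 (m + 1)) v x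

lemma mul_left {w : Euc n → ℝ} (hf : IsTempered ρ f) (hw : HasTemperateGrowth w) :
    IsTempered ρ (w * f) := by
  refine ⟨hw.1.mul hf.1, fun m => ?_⟩
  set leibniz : ℕ → Euc n → ℝ := fun i x =>
    m.choose i * ‖iteratedFDeriv ℝ i w x‖ * ‖iteratedFDeriv ℝ (m - i) f x‖
  have hterm : ∀ i ∈ Finset.range (m + 1), SubexpDecay ρ (leibniz i) := fun i _ => by
    obtain ⟨k, C, hC⟩ := hw.2 i
    refine (hf.subexpDecay (m - i)).of_norm_le_mul_pow (m.choose i * C) k fun x => ?_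
    calc ‖leibniz i x‖ = m.choose i * ‖iteratedFDeriv ℝ i w x‖ * ‖iteratedFDeriv ℝ (m - i) f x‖ :=
          norm_of_nonneg (by positivity)
      _ ≤ m.choose i * (C * (1 + ‖x‖) ^ k) * ‖iteratedFDeriv ℝ (m - i) f x‖ := by
          gcongr
          exact hC x
      _ = m.choose i * C * (1 + ‖x‖) ^ k * ‖iteratedFDeriv ℝ (m - i) f x‖ := by ring
  refine (Finset.sum_induction leibniz (SubexpDecay ρ) (fun _ _ => SubexpDecay.add)
    SubexpDecay.zero hterm).mono fun x => ?_
  rw [Finset.sum_apply, norm_of_nonneg (Finset.sum_nonneg fun i _ => by positivity)]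
  exact norm_iteratedFDeriv_mul_le hw.1 hf.1 x (mod_cast le_top)

end IsTempered

section Gibbs

/-- The measure `e^{-ψ} dx` with potential `ψ`. It is not normalized, so that `IsRegularMeasure μ ψ`
says that `μ` is the Gibbs measure of `ψ`. -/
noncomputable def gibbsMeasure {E : Type*} [MeasureSpace E] (ψ : E → ℝ) : Measure E :=
  volume.withDensity fun x => ENNReal.ofReal (exp (-ψ x))

section MeasureSpace

variable {E : Type*} [MeasureSpace E] {ψ : E → ℝ}

lemma integrable_gibbsMeasure_iff (hψ : Measurable ψ) (g : E → ℝ) :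
    Integrable g (gibbsMeasure ψ) ↔ Integrable fun x => g x * exp (-ψ x) := by
  rw [gibbsMeasure, integrable_withDensity_iff (by fun_prop) (by simp)]
  simp only [ENNReal.toReal_ofReal (exp_pos _).le]

lemma integral_gibbsMeasure (hψ : Measurable ψ) (g : E → ℝ) :
    ∫ x, g x ∂gibbsMeasure ψ = ∫ x, g x * exp (-ψ x) := by
  rw [gibbsMeasure, integral_withDensity_eq_integral_toReal_smul (by fun_prop) (by simp)]
  simp only [ENNReal.toReal_ofReal (exp_pos _).le, smul_eq_mul, mul_comm]

end MeasureSpace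

variable {E : Type*} [NormedAddCommGroup E] [NormedSpace ℝ E] [FiniteDimensional ℝ E]
  [MeasureSpace E] [BorelSpace E] [(volume : Measure E).IsAddHaarMeasure]

lemma integral_fderiv_apply_gibbsMeasure {ψ g : E → ℝ} {v : E} (hψ : Differentiable ℝ ψ)
    (hg : Differentiable ℝ g) (hgi : Integrable g (gibbsMeasure ψ))
    (hg' : Integrable (fun x => fderiv ℝ g x v) (gibbsMeasure ψ))
    (hgψ : Integrable (fun x => fderiv ℝ ψ x v * g x) (gibbsMeasure ψ)) :
    ∫ x, fderiv ℝ g x v ∂gibbsMeasure ψ = ∫ x, fderiv ℝ ψ x v * g x ∂gibbsMeasure ψ := by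
  have hψm : Measurable ψ := hψ.continuous.measurable
  have hdensity (x : E) : fderiv ℝ (fun y => exp (-ψ y)) x v = -(fderiv ℝ ψ x v * exp (-ψ x)) := by
    have hderiv : HasFDerivAt (fun y => exp (-ψ y)) (exp (-ψ x) • -fderiv ℝ ψ x) x :=
      (hψ x).hasFDerivAt.neg.exp
    simp [hderiv.fderiv, mul_comm]
  have hparts : ∫ x, g x * fderiv ℝ (fun y => exp (-ψ y)) x v =
      -∫ x, fderiv ℝ g x v * exp (-ψ x) := by
    refine integral_mul_fderiv_eq_neg_fderiv_mul_of_integrable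
      ((integrable_gibbsMeasure_iff hψm _).1 hg') ?_ ((integrable_gibbsMeasure_iff hψm _).1 hgi)
      (fun x _ => hg x) (fun x _ => (hψ x).neg.exp)
    refine ((integrable_gibbsMeasure_iff hψm _).1 hgψ).neg.congr (.of_forall fun x => ?_)
    simp only [Pi.neg_apply, hdensity]
    ring
  rw [integral_gibbsMeasure hψm, integral_gibbsMeasure hψm, ← neg_inj, ← hparts, ← integral_neg]
  congr 1 with x
  rw [hdensity]
  ring

end Gibbs

section Lop

variable {n : ℕ} {ψ u : Euc n → ℝ}

lemma gradient_apply_eq_fderiv (u : Euc n → ℝ) (x : Euc n) (i : Fin n) :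
    gradient u x i = fderiv ℝ u x (EuclideanSpace.single i 1) := by
  rw [← toDual_gradient, InnerProductSpace.toDual_apply_apply, EuclideanSpace.inner_single_right]
  simp

lemma inner_gradient_eq_sum (u w : Euc n → ℝ) (x : Euc n) :
    ⟪gradient w x, gradient u x⟫ = ∑ i, fderiv ℝ w x (EuclideanSpace.single i 1) *
      fderiv ℝ u x (EuclideanSpace.single i 1) := by
  simp only [PiLp.inner_apply, gradient_apply_eq_fderiv, RCLike.inner_apply, conj_trivial, mul_comm]

lemma lop_eq_sum (hu : ContDiff ℝ 2 u) (x : Euc n) :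
    Lop ψ u x = ∑ i, (fderiv ℝ (fun y => fderiv ℝ u y (EuclideanSpace.single i 1)) x
        (EuclideanSpace.single i 1) -
      fderiv ℝ ψ x (EuclideanSpace.single i 1) * fderiv ℝ u x (EuclideanSpace.single i 1)) := by
  have hu' : Differentiable ℝ (fderiv ℝ u) :=
    (hu.fderiv_right (m := 1) (by norm_num)).differentiable one_ne_zero
  rw [Lop, lap, inner_gradient_eq_sum, Finset.sum_sub_distrib]
  congr 1
  refine Finset.sum_congr rfl fun i _ => ?_
  rw [iteratedFDeriv_two_apply, fderiv_clm_apply (hu' x) (differentiableAt_const _)]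
  simp

end Lop

namespace IsTempered

variable {n : ℕ} {ρ ψ u w : Euc n → ℝ}

lemma fderiv_apply_sub (hψ : HasTemperateGrowth ψ) (hu : IsTempered ρ u) (v : Euc n) :
    IsTempered ρ fun x => fderiv ℝ u x v - fderiv ℝ ψ x v * u x := by
  have hmul := hu.mul_left (hasTemperateGrowth_fderiv_apply hψ v).neg
  convert (hu.fderiv_apply v).add hmul using 1
  ext x
  simp [sub_eq_add_neg]

lemma lop (hψ : HasTemperateGrowth ψ) (hu : IsTempered ρ u) :
    IsTempered ρ (Lop ψ u) := by
  have hsum := sum (s := Finset.univ) fun (i : Fin n) _ =>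
    (hu.fderiv_apply (EuclideanSpace.single i 1)).fderiv_apply_sub hψ (EuclideanSpace.single i 1)
  convert hsum using 1
  ext x
  rw [lop_eq_sum (contDiff_infty.1 hu.1 2), Finset.sum_apply]

-- Squaring the tempered bound turns its factor `1 / √ρ` into `1 / ρ`, which the density cancels.
lemma memLp_two (hψ : Continuous ψ) (hu : IsTempered (fun x => exp (-ψ x)) u) :
    MemLp u 2 (gibbsMeasure ψ) := by
  obtain ⟨C, hC, a, ha, hbound⟩ := hu.2 0
  have hu_cont : Continuous u := hu.1.continuous
  rw [memLp_two_iff_integrable_sq hu_cont.aestronglyMeasurable,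
    integrable_gibbsMeasure_iff hψ.measurable]
  refine ((integrable_exp_neg_mul_norm (a := 2 * a) (by positivity)).const_mul (C ^ 2)).mono'
    (by fun_prop) (.of_forall fun x => ?_)
  calc ‖u x ^ 2 * exp (-ψ x)‖ = ‖u x‖ ^ 2 * exp (-ψ x) := by simp
    _ ≤ (C / √(exp (-ψ x)) * exp (-a * ‖x‖)) ^ 2 * exp (-ψ x) := by
        gcongr
        simpa using hbound x
    _ = C ^ 2 * exp (-a * ‖x‖) ^ 2 := by
        rw [mul_pow, div_pow, sq_sqrt (exp_pos _).le]
        field_simp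
    _ = C ^ 2 * exp (-(2 * a) * ‖x‖) := by
        rw [← exp_nat_mul]
        congr 2
        push_cast
        ring

variable [IsFiniteMeasure (gibbsMeasure ψ)]

lemma integrable (hψ : Continuous ψ) (hu : IsTempered (fun x => exp (-ψ x)) u) :
    Integrable u (gibbsMeasure ψ) :=
  (hu.memLp_two hψ).integrable one_le_two

lemma integral_fderiv_mul (hψ : HasTemperateGrowth ψ) (hw : HasTemperateGrowth w)
    (hu : IsTempered (fun x => exp (-ψ x)) u) (v : Euc n) :
    ∫ x, fderiv ℝ w x v * u x ∂gibbsMeasure ψ =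
      -∫ x, w x * (fderiv ℝ u x v - fderiv ℝ ψ x v * u x) ∂gibbsMeasure ψ := by
  have hψc : Continuous ψ := hψ.1.continuous
  have hwu := hu.mul_left hw
  have hwu' := (hwu.fderiv_apply v).integrable hψc
  have hψwu := (hwu.mul_left (hasTemperateGrowth_fderiv_apply hψ v)).integrable hψc
  have hparts : ∫ x, fderiv ℝ (w * u) x v ∂gibbsMeasure ψ =
      ∫ x, fderiv ℝ ψ x v * (w * u) x ∂gibbsMeasure ψ :=
    integral_fderiv_apply_gibbsMeasure (hψ.1.differentiable (by simp))
      (hwu.1.differentiable (by simp)) (hwu.integrable hψc) hwu' hψwu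
  have hleibniz (x : Euc n) :
      fderiv ℝ (w * u) x v = w x * fderiv ℝ u x v + fderiv ℝ w x v * u x := by
    rw [fderiv_mul (hw.1.differentiable (by simp) x) (hu.1.differentiable (by simp) x)]
    simp [mul_comm]
  rw [eq_neg_iff_add_eq_zero]
  calc _ = ∫ x, fderiv ℝ w x v * u x + w x * (fderiv ℝ u x v - fderiv ℝ ψ x v * u x)
          ∂gibbsMeasure ψ :=
        (integral_add ((hu.mul_left (hasTemperateGrowth_fderiv_apply hw v)).integrable hψc)
          (((hu.fderiv_apply_sub hψ v).mul_left hw).integrable hψc)).symm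
    _ = ∫ x, fderiv ℝ (w * u) x v - fderiv ℝ ψ x v * (w * u) x ∂gibbsMeasure ψ := by
        congr 1 with x
        rw [hleibniz, Pi.mul_apply]
        ring
    _ = 0 := (integral_sub hwu' hψwu).trans (sub_eq_zero.2 hparts)

lemma integral_inner_gradient (hψ : HasTemperateGrowth ψ) (hw : HasTemperateGrowth w)
    (hu : IsTempered (fun x => exp (-ψ x)) u) :
    ∫ x, ⟪gradient w x, gradient u x⟫ ∂gibbsMeasure ψ =
      -∫ x, w x * Lop ψ u x ∂gibbsMeasure ψ := by
  have hψc : Continuous ψ := hψ.1.continuous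
  have hu' (i : Fin n) := hu.fderiv_apply (EuclideanSpace.single i 1)
  simp only [inner_gradient_eq_sum, lop_eq_sum (contDiff_infty.1 hu.1 2), Finset.mul_sum]
  rw [integral_finsetSum, integral_finsetSum, ← Finset.sum_neg_distrib]
  · exact Finset.sum_congr rfl fun i _ => (hu' i).integral_fderiv_mul hψ hw _
  · exact fun i _ => (((hu' i).fderiv_apply_sub hψ _).mul_left hw).integrable hψc
  · exact fun i _ => ((hu' i).mul_left (hasTemperateGrowth_fderiv_apply hw _)).integrable hψc

lemma integral_gradient (hψ : HasTemperateGrowth ψ) (hu : IsTempered (fun x => exp (-ψ x)) u) :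
    ∫ x, gradient u x ∂gibbsMeasure ψ = -∫ x, Lop ψ u x • x ∂gibbsMeasure ψ := by
  have hψc : Continuous ψ := hψ.1.continuous
  have hgrad : Integrable (gradient u) (gibbsMeasure ψ) := .of_eval_piLp fun i => by
    simpa only [gradient_apply_eq_fderiv] using (hu.fderiv_apply _).integrable hψc
  have hLop : Integrable (fun x => Lop ψ u x • x) (gibbsMeasure ψ) := .of_eval_piLp fun i => by
    refine (((hu.lop hψ).mul_left (EuclideanSpace.proj (𝕜 := ℝ) i).hasTemperateGrowth).integrable
      hψc).congr (.of_forall fun x => ?_)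
    simp [mul_comm]
  refine ext_inner_left ℝ fun v => ?_
  have hgradient_inner (x : Euc n) : gradient (fun y => ⟪v, y⟫) x = v :=
    (hasGradientAt_iff_hasFDerivAt.2 (innerSL ℝ v).hasFDerivAt).gradient
  have hv := hu.integral_inner_gradient hψ (w := fun y => ⟪v, y⟫) (innerSL ℝ v).hasTemperateGrowth
  simp only [hgradient_inner] at hv
  rw [inner_neg_right, ← integral_inner hgrad, ← integral_inner hLop, hv]
  simp only [real_inner_smul_right, mul_comm]

end IsTempered

section Convexity

variable {E : Type*} [NormedAddCommGroup E] [NormedSpace ℝ E] {φ : E → ℝ}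

lemma add_fderiv_add_half_le {x v : E} {c : ℝ} (hφ : ContDiff ℝ 2 φ)
    (hc : ∀ t ∈ Set.Ioo (0 : ℝ) 1, c ≤ iteratedFDeriv ℝ 2 φ (x + t • v) ![v, v]) :
    φ x + fderiv ℝ φ x v + c / 2 ≤ φ (x + v) := by
  have hφ' : Differentiable ℝ (fderiv ℝ φ) :=
    (hφ.fderiv_right (m := 1) (by norm_num)).differentiable one_ne_zero
  have hline (t : ℝ) : HasDerivAt (fun s : ℝ => x + s • v) v t := by
    simpa using ((hasDerivAt_id t).smul_const v).const_add x
  have hderiv (t : ℝ) : HasDerivAt (fun s => φ (x + s • v) - c / 2 * s ^ 2)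
      (fderiv ℝ φ (x + t • v) v - c * t) t := by
    refine (((hφ.differentiable two_ne_zero _).hasFDerivAt.comp_hasDerivAt t (hline t)).sub
      ((hasDerivAt_pow 2 t).const_mul (c / 2))).congr_deriv ?_
    simp
    ring
  have hderiv2 (t : ℝ) : HasDerivAt (fun s => fderiv ℝ φ (x + s • v) v - c * s)
      (iteratedFDeriv ℝ 2 φ (x + t • v) ![v, v] - c) t := by
    refine ((((hφ' _).hasFDerivAt.comp_hasDerivAt t (hline t)).clm_apply
      (hasDerivAt_const t v)).sub ((hasDerivAt_id t).const_mul c)).congr_deriv ?_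
    simp [iteratedFDeriv_two_apply]
  have hconvex : ConvexOn ℝ (Set.Icc 0 1) fun s => φ (x + s • v) - c / 2 * s ^ 2 :=
    convexOn_of_hasDerivWithinAt2_nonneg (convex_Icc 0 1)
      (fun t _ => (hderiv t).continuousAt.continuousWithinAt)
      (fun t _ => (hderiv t).hasDerivWithinAt) (fun t _ => (hderiv2 t).hasDerivWithinAt)
      (fun t ht => sub_nonneg.2 (hc t (by rwa [interior_Icc] at ht)))
  have htangent := hconvex.le_slope_of_hasDerivAt (by simp) (by simp) zero_lt_one (hderiv 0)
  simp only [slope_def_field, zero_smul, add_zero, one_smul] at htangent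
  linarith

-- Completing the square in `‖x‖` makes the quadratic lower bound beat any linear function.
lemma exists_mul_norm_sub_le {ε : ℝ} (hε : 0 < ε) (hφ : ContDiff ℝ 2 φ)
    (hess : ∀ x v : E, ε * ‖v‖ ^ 2 ≤ iteratedFDeriv ℝ 2 φ x ![v, v]) (a : ℝ) :
    ∃ B : ℝ, ∀ x, a * ‖x‖ - B ≤ φ x := by
  set b := a + ‖fderiv ℝ φ 0‖
  refine ⟨b ^ 2 / (2 * ε) - φ 0, fun x => ?_⟩
  have hquad : φ 0 + fderiv ℝ φ 0 x + ε * ‖x‖ ^ 2 / 2 ≤ φ x := by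
    simpa using add_fderiv_add_half_le (x := 0) hφ fun t _ => hess (0 + t • x) x
  have hlin : -(‖fderiv ℝ φ 0‖ * ‖x‖) ≤ fderiv ℝ φ 0 x :=
    neg_le_of_abs_le ((fderiv ℝ φ 0).le_opNorm x)
  have hsquare : ε * ‖x‖ ^ 2 / 2 - b * ‖x‖ + b ^ 2 / (2 * ε) = (ε * ‖x‖ - b) ^ 2 / (2 * ε) := by
    field_simp
    ring
  have hnonneg : 0 ≤ (ε * ‖x‖ - b) ^ 2 / (2 * ε) := by positivity
  linarith [add_mul a ‖fderiv ℝ φ 0‖ ‖x‖]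

end Convexity

namespace IsRegularPotential

variable {n : ℕ} {ψ : Euc n → ℝ}

lemma hasTemperateGrowth (hψ : IsRegularPotential ψ) : HasTemperateGrowth ψ := by
  refine ⟨hψ.1, fun m => ?_⟩
  obtain ⟨C, k, hC⟩ := hψ.2.2 m
  exact ⟨k, C, hC⟩

lemma isTempered_one (hψ : IsRegularPotential ψ) : IsTempered (fun x => exp (-ψ x)) 1 := by
  obtain ⟨ε, hε, hess⟩ := hψ.2.1
  obtain ⟨B, hB⟩ := exists_mul_norm_sub_le hε (contDiff_infty.1 hψ.1 2) (fun x v => (hess x v).1) 2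
  refine ⟨contDiff_const, fun m => ⟨exp (B / 2), exp_pos _, 1, one_pos, fun x => ?_⟩⟩
  have hone : ‖iteratedFDeriv ℝ m (1 : Euc n → ℝ) x‖ ≤ 1 := by
    rcases eq_or_ne m 0 with rfl | hm
    · simp
    · simp [Pi.one_def, iteratedFDeriv_const_of_ne hm]
  refine hone.trans ?_
  rw [← exp_half, ← exp_sub, ← exp_add, one_le_exp_iff]
  linarith [hB x]

lemma isTempered_of_hasTemperateGrowth {w : Euc n → ℝ} (hψ : IsRegularPotential ψ)
    (hw : HasTemperateGrowth w) : IsTempered (fun x => exp (-ψ x)) w := by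
  simpa using hψ.isTempered_one.mul_left hw

lemma memLp_id (hψ : IsRegularPotential ψ) : MemLp id 2 (gibbsMeasure ψ) :=
  .of_eval_piLp fun i => (hψ.isTempered_of_hasTemperateGrowth
    (EuclideanSpace.proj (𝕜 := ℝ) i).hasTemperateGrowth).memLp_two hψ.1.continuous

end IsRegularPotential

section Covariance

lemma sq_covariance_le {Ω : Type*} {mΩ : MeasurableSpace Ω} {μ : Measure Ω} [IsFiniteMeasure μ]
    {X Y : Ω → ℝ} (hX : MemLp X 2 μ) (hY : MemLp Y 2 μ) :
    cov[X, Y; μ] ^ 2 ≤ Var[X; μ] * Var[Y; μ] := by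
  have hquad (t : ℝ) : 0 ≤ Var[Y; μ] * (t * t) + 2 * cov[X, Y; μ] * t + Var[X; μ] :=
    calc 0 ≤ Var[X + t • Y; μ] := variance_nonneg _ _
      _ = Var[Y; μ] * (t * t) + 2 * cov[X, Y; μ] * t + Var[X; μ] := by
        rw [variance_add hX (hY.const_smul t), variance_smul,
          covariance_smul_right]
        ring
  have hdiscrim := discrim_le_zero hquad
  rw [discrim] at hdiscrim
  linarith

lemma covariance_inner {E : Type*} [NormedAddCommGroup E] [InnerProductSpace ℝ E] [CompleteSpace E]
    [MeasurableSpace E] {μ : Measure E} [IsProbabilityMeasure μ] {f : E → ℝ} (hf : MemLp f 2 μ)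
    (hμ : MemLp id 2 μ) (v : E) :
    cov[f, fun x => ⟪v, x⟫; μ] = ⟪v, ∫ x, f x • x ∂μ - (∫ x, f x ∂μ) • ∫ x, x ∂μ⟫ := by
  have hid : Integrable (fun x : E => x) μ := hμ.integrable one_le_two
  have hfid : Integrable (fun x => f x • x) μ := memLp_one_iff_integrable.1 (hμ.smul hf)
  have hinner : MemLp (fun x => ⟪v, x⟫) 2 μ := hμ.const_inner v
  rw [covariance_eq_sub hf hinner, inner_sub_right,
    real_inner_smul_right, ← integral_inner hfid, ← integral_inner hid]
  simp only [real_inner_smul_right, Pi.mul_apply]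

variable {n : ℕ} {μ : Measure (Euc n)} [IsProbabilityMeasure μ]

lemma variance_inner_eq_inner_covMatrix (hμ : MemLp id 2 μ) (v : Euc n) :
    Var[fun x => ⟪v, x⟫; μ] = ⟪v, Matrix.toEuclideanCLM (𝕜 := ℝ) (covMatrix μ) v⟫ := by
  have hcoord (i : Fin n) : MemLp (fun x : Euc n => x i) 2 μ := hμ.eval_piLp i
  have hpi := covarianceBilin_apply_pi hcoord v v
  simp only [WithLp.toLp_ofLp, Measure.map_id'] at hpi
  rw [← covarianceBilin_self hμ, hpi]
  simp only [PiLp.inner_apply, Matrix.ofLp_toEuclideanCLM, Matrix.mulVec, dotProduct,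
    RCLike.inner_apply, conj_trivial, Finset.sum_mul, covMatrix, Matrix.of_apply]
  refine Finset.sum_congr rfl fun i _ => Finset.sum_congr rfl fun j _ => ?_
  rw [covariance_eq_sub (hcoord i) (hcoord j)]
  simp only [Pi.mul_apply]
  ring

lemma variance_inner_le (hμ : MemLp id 2 μ) (v : Euc n) :
    Var[fun x => ⟪v, x⟫; μ] ≤ opNorm (covMatrix μ) * ‖v‖ ^ 2 := by
  rw [variance_inner_eq_inner_covMatrix hμ]
  calc ⟪v, Matrix.toEuclideanCLM (𝕜 := ℝ) (covMatrix μ) v⟫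
      ≤ ‖v‖ * ‖Matrix.toEuclideanCLM (𝕜 := ℝ) (covMatrix μ) v‖ := real_inner_le_norm _ _
    _ ≤ ‖v‖ * (opNorm (covMatrix μ) * ‖v‖) := by
        gcongr
        exact ContinuousLinearMap.le_opNorm _ _
    _ = opNorm (covMatrix μ) * ‖v‖ ^ 2 := by ring

lemma norm_sq_integral_smul_sub_le {f : Euc n → ℝ} (hf : MemLp f 2 μ) (hμ : MemLp id 2 μ) :
    ‖∫ x, f x • x ∂μ - (∫ x, f x ∂μ) • ∫ x, x ∂μ‖ ^ 2 ≤ Var[f; μ] * opNorm (covMatrix μ) := by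
  set v := ∫ x, f x • x ∂μ - (∫ x, f x ∂μ) • ∫ x, x ∂μ
  have hvar : 0 ≤ Var[f; μ] := variance_nonneg _ _
  have hop : 0 ≤ opNorm (covMatrix μ) := norm_nonneg _
  rcases eq_or_ne v 0 with hv | hv
  · simpa [hv] using mul_nonneg hvar hop
  refine le_of_mul_le_mul_right ?_ (pow_pos (norm_pos_iff.2 hv) 2)
  calc ‖v‖ ^ 2 * ‖v‖ ^ 2 = cov[f, fun x => ⟪v, x⟫; μ] ^ 2 := by
        rw [covariance_inner hf hμ, real_inner_self_eq_norm_sq]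
        ring
    _ ≤ Var[f; μ] * Var[fun x => ⟪v, x⟫; μ] := sq_covariance_le hf (hμ.const_inner v)
    _ ≤ Var[f; μ] * (opNorm (covMatrix μ) * ‖v‖ ^ 2) := by
        gcongr
        exact variance_inner_le hμ v
    _ = Var[f; μ] * opNorm (covMatrix μ) * ‖v‖ ^ 2 := by ring

end Covariance

theorem eigenfunction_moment_identity_general {n : ℕ} {ψ f : Euc n → ℝ} {lam : ℝ}
    [IsProbabilityMeasure (gibbsMeasure ψ)] (hψ : HasTemperateGrowth ψ)
    (hid : MemLp id 2 (gibbsMeasure ψ)) (hf : IsTempered (fun x => exp (-ψ x)) f)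
    (hmean : ∫ x, f x ∂gibbsMeasure ψ = 0) (hnorm : ∫ x, f x ^ 2 ∂gibbsMeasure ψ = 1)
    (heig : ∀ x, Lop ψ f x = -lam * f x) :
    ‖∫ x, gradient f x ∂gibbsMeasure ψ‖ ^ 2 =
      lam ^ 2 * ‖∫ x, f x • x ∂gibbsMeasure ψ‖ ^ 2 ∧
    lam ^ 2 * ‖∫ x, f x • x ∂gibbsMeasure ψ‖ ^ 2 ≤
      lam ^ 2 * opNorm (covMatrix (gibbsMeasure ψ)) := by
  have hgradient : ∫ x, gradient f x ∂gibbsMeasure ψ = lam • ∫ x, f x • x ∂gibbsMeasure ψ := by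
    rw [hf.integral_gradient hψ, ← integral_neg, ← integral_smul]
    simp only [heig, smul_smul, neg_mul, neg_smul, neg_neg]
  have hfL2 : MemLp f 2 (gibbsMeasure ψ) := hf.memLp_two hψ.1.continuous
  have hvar : Var[f; gibbsMeasure ψ] = 1 := by
    simp [variance_eq_sub hfL2, hmean, hnorm]
  have hmoment : ‖∫ x, f x • x ∂gibbsMeasure ψ‖ ^ 2 ≤ opNorm (covMatrix (gibbsMeasure ψ)) := by
    simpa [hmean, hvar] using norm_sq_integral_smul_sub_le hfL2 hid
  refine ⟨?_, by gcongr⟩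
  rw [hgradient, norm_smul, mul_pow, norm_eq_abs, sq_abs]

/-- For an eigenfunction `f` of `−L_μ` with eigenvalue `λ`, normalized in L²(μ):
`|∫ ∇f dμ|² = λ² |∫ f(x) x dμ|² ≤ λ² ‖Cov(μ)‖_op`. -/
theorem eigenfunction_moment_identity {n : ℕ} (μ : Measure (Euc n))
    [IsProbabilityMeasure μ] (ψ : Euc n → ℝ) (hreg : IsRegularMeasure μ ψ)
    (lam : ℝ) (hlam : 0 < lam)
    (f : Euc n → ℝ) (hf : IsTempered (fun x => Real.exp (-ψ x)) f)
    (hmean : ∫ x, f x ∂μ = 0) (hnorm : ∫ x, f x ^ 2 ∂μ = 1)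
    (heig : ∀ x, Lop ψ f x = -lam * f x) :
    ‖∫ x, gradient f x ∂μ‖ ^ 2 = lam ^ 2 * ‖∫ x, f x • x ∂μ‖ ^ 2 ∧
    lam ^ 2 * ‖∫ x, f x • x ∂μ‖ ^ 2 ≤ lam ^ 2 * opNorm (covMatrix μ) := by
  obtain rfl : μ = gibbsMeasure ψ := hreg.2
  exact eigenfunction_moment_identity_general hreg.1.hasTemperateGrowth hreg.1.memLp_id hf hmean
    hnorm heig
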